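/- arXiv:2308.04130 — 13 statements merged into one kernel-verified Lean document; each statement's English description precedes it below -/
import Mathlib

section
/- For all real numbers S, N, L, K with 0 ≤ N < L < K, it holds that ((L - (K - S)₊)₊ - N)₊ = (S - (K - (L - N)))₊ - (S - K)₊, where x₊ := max(x, 0). (Thus a Call with strike N written on a Put with strike L on a Put with strike K equals a Call-spread with strikes K - (L - N) and K on the original underlier.) -/
/-- A Call with strike `N` written on a Put with strike `L` on a Put with strike `K`
(with `0 ≤ N < L < K`) equals a Call-spread with strikes `K - (L - N)` and `K` on the
original underlier: `((L - (K - S)₊)₊ - N)₊ = (S - (K - (L - N)))₊ - (S - K)₊`. -/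
theorem call_on_put_on_put_is_call_spread (S N L K : ℝ)
    (hN : 0 ≤ N) (hNL : N < L) (hLK : L < K) :
    max (max (L - max (K - S) 0) 0 - N) 0
      = max (S - (K - (L - N))) 0 - max (S - K) 0 := by
  simp only [max_def]
  split_ifs <;> linarith
end

section
/- Let S ≥ 0 and let f : [0, ∞) → ℝ be convex, nonincreasing, and satisfy (S - x)₊ ≤ f(x) ≤ S for all x ≥ 0 (f is a Call price curve in the strike variable). Then for all K, M ≥ 0 it holds that (f(K) - M)₊ ≤ f(K + M) ≤ f(K). In particular the map M ↦ f(K + M) (the relative Call-on-Call price as a function of its strike M, for underlier value X = f(K)) is convex, nonincreasing, has slopes bounded below by -1, and satisfies (X - M)₊ ≤ f(K + M) ≤ X. -/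
/-- If `K ↦ f K` is a Call price curve (convex, nonincreasing, with
`(S - K)₊ ≤ f K ≤ S` on `[0, ∞)`), then for all `K, M ≥ 0` one has
`(f K - M)₊ ≤ f (K + M) ≤ f K`; in particular the relative Call-on-Call price
`M ↦ f (K + M)` (with underlier value `X = f K`) is convex, nonincreasing, has slopes
bounded below by `-1`, and satisfies `(X - M)₊ ≤ f (K + M) ≤ X`. -/
theorem call_on_call_strike_properties (S : ℝ) (hS : 0 ≤ S) (f : ℝ → ℝ)
    (hconv : ConvexOn ℝ (Set.Ici 0) f)
    (hanti : AntitoneOn f (Set.Ici 0))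
    (hbounds : ∀ x : ℝ, 0 ≤ x → max (S - x) 0 ≤ f x ∧ f x ≤ S) :
    ∀ K M : ℝ, 0 ≤ K → 0 ≤ M →
      (max (f K - M) 0 ≤ f (K + M) ∧ f (K + M) ≤ f K) ∧
      ConvexOn ℝ (Set.Ici 0) (fun M => f (K + M)) ∧
      AntitoneOn (fun M => f (K + M)) (Set.Ici 0) := by
  intro K M hK hM
  have hKM : 0 ≤ K + M := add_nonneg hK hM
  have h0 : f 0 = S := by
    have h := hbounds 0 le_rfl
    have h1 := (le_max_left _ _).trans h.1
    linarith [h.2]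
  refine ⟨⟨max_le ?_ ((le_max_right _ _).trans (hbounds _ hKM).1), ?_⟩, ?_, ?_⟩
  · have hKl := (le_max_left _ _).trans (hbounds K hK).1
    rcases hK.eq_or_lt with rfl | hKpos
    · have h1 := (le_max_left _ _).trans (hbounds _ hKM).1
      linarith
    rcases hM.eq_or_lt with rfl | hMpos
    · simp
    have hs := hconv.slope_mono_adjacent (x := 0) (y := K) (z := K + M)
      (Set.mem_Ici.2 le_rfl) (Set.mem_Ici.2 hKM) hKpos (by linarith)
    have h1 : -1 ≤ (f K - f 0) / (K - 0) := by
      rw [le_div_iff₀ (by linarith)]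
      linarith
    have h2 := h1.trans hs
    rw [le_div_iff₀ (by linarith)] at h2
    linarith
  · exact hanti hK hKM (by linarith)
  · refine ⟨convex_Ici 0, ?_⟩
    intro x hx y hy a b ha hb hab
    have hx' : 0 ≤ x := hx
    have hy' : 0 ≤ y := hy
    have h := hconv.2 (Set.mem_Ici.2 (add_nonneg hK hx')) (Set.mem_Ici.2 (add_nonneg hK hy'))
      ha hb hab
    have e : K + (a • x + b • y) = a • (K + x) + b • (K + y) := by
      simp only [smul_eq_mul]
      linear_combination (-K) * hab
    show f (K + (a • x + b • y)) ≤ _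
    rw [e]
    exact h
  · intro x hx y hy hxy
    have hx' : 0 ≤ x := hx
    have hy' : 0 ≤ y := hy
    exact hanti (add_nonneg hK hx') (add_nonneg hK hy') (by linarith)
end

section
/- Let c : (0, ∞) → ℝ be twice continuously differentiable, convex (c'' ≥ 0), nonincreasing (c' ≤ 0), and strictly positive. Then the function l ↦ c'(l) / (c(l) - l·c'(l)) is nondecreasing on (0, ∞). (This is the condition ensuring that, for a homogeneous pricing function with normalized price c, the Call-on-Call price K ↦ Ĉ_K(X, M) is nondecreasing in the relative underlying strike K.) -/
/-- For a twice continuously differentiable, convex (`c'' ≥ 0`), nonincreasing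
(`c' ≤ 0`), strictly positive normalized price `c` on `(0, ∞)`, the function
`l ↦ c'(l) / (c(l) - l·c'(l))` is nondecreasing on `(0, ∞)`. -/
theorem homogeneous_monotonicity_condition (c : ℝ → ℝ)
    (hsmooth : ContDiffOn ℝ 2 c (Set.Ioi 0))
    (hconvex : ∀ l ∈ Set.Ioi (0:ℝ), 0 ≤ deriv (deriv c) l)
    (hanti : ∀ l ∈ Set.Ioi (0:ℝ), deriv c l ≤ 0)
    (hpos : ∀ l ∈ Set.Ioi (0:ℝ), 0 < c l) :
    MonotoneOn (fun l => deriv c l / (c l - l * deriv c l)) (Set.Ioi 0) := by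
  have hc : ∀ l ∈ Set.Ioi (0:ℝ), HasDerivAt c (deriv c l) l := fun l hl =>
    ((hsmooth.differentiableOn (by norm_num)).differentiableAt
      (isOpen_Ioi.mem_nhds hl)).hasDerivAt
  have hdc : ContDiffOn ℝ 1 (deriv c) (Set.Ioi 0) :=
    hsmooth.deriv_of_isOpen isOpen_Ioi (by norm_num)
  have hc2 : ∀ l ∈ Set.Ioi (0:ℝ), HasDerivAt (deriv c) (deriv (deriv c) l) l := fun l hl =>
    ((hdc.differentiableOn (by norm_num)).differentiableAt
      (isOpen_Ioi.mem_nhds hl)).hasDerivAt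
  have hD : ∀ l ∈ Set.Ioi (0:ℝ), 0 < c l - l * deriv c l := fun l hl => by
    have h1 := mul_nonpos_of_nonneg_of_nonpos (le_of_lt (Set.mem_Ioi.1 hl)) (hanti l hl)
    linarith [hpos l hl]
  have hder : ∀ l ∈ Set.Ioi (0:ℝ), HasDerivAt (fun l => deriv c l / (c l - l * deriv c l))
      (deriv (deriv c) l * c l / (c l - l * deriv c l) ^ 2) l := fun l hl => by
    have h := (hc2 l hl).fun_div ((hc l hl).fun_sub ((hasDerivAt_id' l).fun_mul (hc2 l hl)))
      (hD l hl).ne'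
    refine h.congr_deriv ?_
    congr 1
    ring
  refine monotoneOn_of_deriv_nonneg (convex_Ioi 0)
    (fun l hl => (hder l hl).continuousAt.continuousWithinAt) ?_ ?_
  · rw [interior_Ioi]
    exact fun l hl => (hder l hl).differentiableAt.differentiableWithinAt
  · rw [interior_Ioi]
    intro l hl
    rw [(hder l hl).deriv]
    exact div_nonneg (mul_nonneg (hconvex l hl) (hpos l hl).le) (sq_nonneg _)
end

section
/- Let v > 0 and, for k > 0, set d₁(k) = -log(k)/v + v/2 and d₂(k) = -log(k)/v - v/2. Then the function k ↦ k·φ(d₂(k)) / (v·Φ(d₁(k))) is strictly increasing on (0, ∞). (This is the condition ensuring that Black-Scholes Call-on-Call prices are convex with respect to the underlier; its proof reduces to the inequality x·Φ(x) + φ(x) > 0 for all real x.) -/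
open MeasureTheory

/-- The standard normal probability density function. -/
noncomputable def phi (x : ℝ) : ℝ := Real.exp (-x ^ 2 / 2) / Real.sqrt (2 * Real.pi)

/-- The standard normal cumulative distribution function. -/
noncomputable def Phi (x : ℝ) : ℝ := ∫ t in Set.Iic x, phi t

lemma phi_pos_aux (x : ℝ) : 0 < phi x := by unfold phi; positivity

lemma phi_integrable_aux : Integrable phi := by
  have h := (integrable_exp_neg_mul_sq (b := 1 / 2) (by norm_num)).div_const (Real.sqrt (2 * Real.pi))
  refine h.congr (Filter.Eventually.of_forall fun x => ?_)
  simp only [phi]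
  congr 2
  ring

lemma Phi_shift_aux (x : ℝ) : Phi x = ∫ t in Set.Iic 0, phi (t + x) := by
  have h := (measurePreserving_add_right (volume : Measure ℝ) x).setIntegral_preimage_emb
    (measurableEmbedding_addRight x) phi (Set.Iic x)
  rw [Phi, ← h]
  congr 2
  ext t
  simp

lemma integral_pos_aux {f : ℝ → ℝ} (hf : Integrable f) (h : ∀ t < 0, 0 < f t) :
    0 < ∫ t in Set.Iic 0, f t := by
  rw [integral_Iic_eq_integral_Iio]
  rw [setIntegral_pos_iff_support_of_nonneg_ae _ hf.integrableOn]
  · have : Set.Iio (0 : ℝ) ⊆ Function.support f ∩ Set.Iio 0 :=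
      fun t ht => ⟨(h t ht).ne', ht⟩
    exact lt_of_lt_of_le (by simp) (measure_mono this)
  · filter_upwards [ae_restrict_mem measurableSet_Iio] with t ht using (h t ht).le

lemma Phi_pos_aux (x : ℝ) : 0 < Phi x := by
  rw [Phi_shift_aux]
  exact integral_pos_aux (phi_integrable_aux.comp_add_right x) fun t _ => phi_pos_aux _

lemma cross_aux {x y : ℝ} (hxy : x < y) : phi y * Phi x < phi x * Phi y := by
  have hx := (phi_integrable_aux.comp_add_right x).const_mul (phi y)
  have hy := (phi_integrable_aux.comp_add_right y).const_mul (phi x)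
  have h := integral_pos_aux (hy.sub hx) (by
    intro t ht
    have hpi : 0 < Real.sqrt (2 * Real.pi) := by positivity
    simp only [Pi.sub_apply, phi, sub_pos, div_mul_div_comm, ← Real.exp_add]
    apply div_lt_div_of_pos_right _ (by positivity)
    apply Real.exp_lt_exp.2
    nlinarith)
  simp only [Pi.sub_apply] at h
  rw [integral_sub hy.integrableOn hx.integrableOn, integral_const_mul, integral_const_mul,
    ← Phi_shift_aux, ← Phi_shift_aux] at h
  linarith

lemma mul_phi_aux (v : ℝ) (hv : 0 < v) (k : ℝ) (hk : 0 < k) :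
    k * phi (-Real.log k / v - v / 2) = phi (-Real.log k / v + v / 2) := by
  unfold phi
  rw [← mul_div_assoc]
  congr 1
  nth_rewrite 1 [← Real.exp_log hk]
  rw [← Real.exp_add]
  congr 1
  field_simp
  ring

/-- With `d₁(k) = -log k / v + v/2` and `d₂(k) = -log k / v - v/2`, the function
`k ↦ k·φ(d₂(k)) / (v·Φ(d₁(k)))` is strictly increasing on `(0, ∞)`; this is the
condition ensuring convexity of Black-Scholes Calls on Calls in the underlier. -/
theorem bs_convexity_condition (v : ℝ) (hv : 0 < v) :
    StrictMonoOn
      (fun k => k * phi (-Real.log k / v - v / 2) / (v * Phi (-Real.log k / v + v / 2)))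
      (Set.Ioi 0) := by
  intro a ha b hb hab
  have ha' : 0 < a := ha
  have hb' : 0 < b := hb
  simp only [mul_phi_aux v hv a ha', mul_phi_aux v hv b hb']
  have hlt : -Real.log b / v + v / 2 < -Real.log a / v + v / 2 := by
    have := Real.log_lt_log ha' hab
    gcongr
  have h := cross_aux hlt
  rw [div_lt_div_iff₀ (mul_pos hv (Phi_pos_aux _)) (mul_pos hv (Phi_pos_aux _))]
  nlinarith [mul_lt_mul_of_pos_left h hv]
end

section
/- Let c be in the Tehranchi space 𝕔 and let k ≥ 0 with c(k) > 0. Then the function 𝕋_k c defined by (𝕋_k c)(m) = c(k + c(k)·m)/c(k) for m ≥ 0 also belongs to 𝕔: it is convex and satisfies (1 - m)₊ ≤ (𝕋_k c)(m) ≤ 1 for all m ≥ 0. Moreover (𝕋_0 c) = c. -/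
/-- The Tehranchi space: convex functions `c` with `(1 - m)₊ ≤ c m ≤ 1` for `m ≥ 0`. -/
def TehranchiSpace (c : ℝ → ℝ) : Prop :=
  ConvexOn ℝ (Set.Ici 0) c ∧ ∀ m : ℝ, 0 ≤ m → max (1 - m) 0 ≤ c m ∧ c m ≤ 1

/-- For `c` in the Tehranchi space and `k ≥ 0` with `c k > 0`, the transform
`𝕋_k c : m ↦ c (k + c k · m) / c k` again belongs to the Tehranchi space, and
`𝕋_0 c = c`. -/
theorem Tk_maps_Tehranchi_into_itself (c : ℝ → ℝ) (hc : TehranchiSpace c)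
    (k : ℝ) (hk : 0 ≤ k) (hck : 0 < c k) :
    TehranchiSpace (fun m => c (k + c k * m) / c k) ∧
    ∀ m : ℝ, 0 ≤ m → c (0 + c 0 * m) / c 0 = c m := by
  obtain ⟨hconv, hb⟩ := hc
  have h0 : c 0 = 1 := by
    have h := hb 0 le_rfl
    have h1 : (1 : ℝ) - 0 ≤ c 0 := le_trans (le_max_left _ _) h.1
    linarith [h.2]
  have hnn : ∀ x, 0 ≤ x → 0 ≤ c x := fun x hx => le_trans (le_max_right _ _) (hb x hx).1
  have hlow : ∀ x, 0 ≤ x → 1 - x ≤ c x := fun x hx => le_trans (le_max_left _ _) (hb x hx).1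
  have hcv : ∀ x y t : ℝ, 0 ≤ x → 0 ≤ y → 0 ≤ t → t ≤ 1 →
      c ((1 - t) * x + t * y) ≤ (1 - t) * c x + t * c y := by
    intro x y t hx hy ht ht1
    have h := hconv.2 (Set.mem_Ici.2 hx) (Set.mem_Ici.2 hy) (sub_nonneg.2 ht1) ht (by ring)
    simpa only [smul_eq_mul] using h
  have hanti : ∀ x y : ℝ, 0 ≤ x → x ≤ y → c y ≤ c x := by
    intro x y hx hxy
    by_contra hlt
    have hd : 0 < c y - c x := by linarith [not_le.1 hlt]
    have hy1 := (hb y (hx.trans hxy)).2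
    have hx0 := hnn x hx
    have hz : 0 ≤ x + (y - x) / ((c y - c x) / 2) :=
      add_nonneg hx (div_nonneg (sub_nonneg.2 hxy) (by linarith))
    have h := hcv x _ ((c y - c x) / 2) hx hz (by linarith) (by linarith)
    have he : (1 - (c y - c x) / 2) * x
        + (c y - c x) / 2 * (x + (y - x) / ((c y - c x) / 2)) = y := by
      rw [mul_add, mul_div_cancel₀ _ (by linarith : (c y - c x) / 2 ≠ 0)]
      ring
    rw [he] at h
    have hz1 := (hb _ hz).2
    have h2 := mul_le_mul_of_nonneg_left hz1 (by linarith : 0 ≤ (c y - c x) / 2)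
    nlinarith [mul_nonneg hd.le hx0]
  have hslope : ∀ x y : ℝ, 0 ≤ x → x ≤ y → c x + x ≤ c y + y := by
    intro x y hx hxy
    rcases hx.eq_or_lt with rfl | hx'
    · rw [h0]; linarith [hlow y hxy]
    have hy : 0 < y := hx'.trans_le hxy
    have ht : x / y * y = x := div_mul_cancel₀ _ hy.ne'
    have ht1 : x / y ≤ 1 := (div_le_one hy).2 hxy
    have h := hcv 0 y (x / y) le_rfl hy.le (div_nonneg hx hy.le) ht1
    rw [mul_zero, zero_add, ht, h0] at h
    nlinarith [mul_nonneg (sub_nonneg.2 ht1) (sub_nonneg.2 (hlow y hy.le))]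
  refine ⟨⟨⟨convex_Ici 0, ?_⟩, ?_⟩, ?_⟩
  · intro x hx y hy a b ha hb' hab
    have hx' : 0 ≤ k + c k * x := add_nonneg hk (mul_nonneg hck.le hx)
    have hy' : 0 ≤ k + c k * y := add_nonneg hk (mul_nonneg hck.le hy)
    have h := hconv.2 (Set.mem_Ici.2 hx') (Set.mem_Ici.2 hy') ha hb' hab
    simp only [smul_eq_mul] at h ⊢
    have he : a * (k + c k * x) + b * (k + c k * y) = k + c k * (a * x + b * y) := by
      linear_combination k * hab
    rw [he] at h
    rw [← mul_div_assoc, ← mul_div_assoc, ← add_div]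
    exact div_le_div_of_nonneg_right h hck.le
  · intro m hm
    have hm' : 0 ≤ c k * m := mul_nonneg hck.le hm
    refine ⟨max_le ?_ (div_nonneg (hnn _ (add_nonneg hk hm')) hck.le), ?_⟩
    · rw [le_div_iff₀ hck]
      linarith [hslope k (k + c k * m) hk (by linarith)]
    · rw [div_le_one hck]
      exact hanti _ _ hk (by linarith)
  · intro m _
    rw [h0, zero_add, one_mul, div_one]
end

section
/- Let c be in the Tehranchi space 𝕔 with c(k) > 0 for all k ≥ 0. Then for every fixed m ≥ 0, the limit as k → ∞ of c(k + c(k)·m)/c(k) equals 1; that is, 𝕋_k c converges pointwise to the constant function 1 as k → ∞. -/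
/-- For `c` in the Tehranchi space with `c > 0` on `[0, ∞)` and every fixed `m ≥ 0`,
`(𝕋_k c)(m) = c (k + c k · m) / c k → 1` as `k → ∞`. -/
theorem Tk_tendsto_one (c : ℝ → ℝ) (hc : TehranchiSpace c)
    (hpos : ∀ k : ℝ, 0 ≤ k → 0 < c k) (m : ℝ) (hm : 0 ≤ m) :
    Filter.Tendsto (fun k => c (k + c k * m) / c k) Filter.atTop (nhds 1) := by
  obtain ⟨hconv, hb⟩ := hc
  rcases hm.eq_or_lt with rfl | hm
  · refine Filter.Tendsto.congr' ?_ tendsto_const_nhds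
    filter_upwards [Filter.eventually_ge_atTop 0] with k hk
    simp [(hpos k hk).ne']
  have anti : ∀ a b : ℝ, 0 ≤ a → a < b → c b ≤ c a := by
    intro a b ha hab
    by_contra! h
    have hs : 0 < (c b - c a) / (b - a) := div_pos (by linarith) (by linarith)
    set s := (c b - c a) / (b - a) with hsd
    have hi : 0 < 1 / s := by positivity
    have h1 := hconv.slope_mono_adjacent (x := a) (y := b) (z := b + 1 / s)
      ha (by simp only [Set.mem_Ici]; linarith) hab (by linarith)
    rw [← hsd, add_sub_cancel_left, le_div_iff₀ hi, mul_one_div_cancel hs.ne'] at h1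
    have h2 := (hb (b + 1 / s) (by linarith)).2
    have h3 := hpos b (by linarith)
    linarith
  have hlim : Filter.Tendsto (fun k : ℝ => 1 - m / k) Filter.atTop (nhds 1) := by
    simpa using (tendsto_const_nhds (x := (1 : ℝ))).sub
      (Filter.Tendsto.const_div_atTop Filter.tendsto_id m)
  refine tendsto_of_tendsto_of_tendsto_of_le_of_le' hlim tendsto_const_nhds ?_ ?_
  · filter_upwards [Filter.eventually_gt_atTop 0] with k hk
    have hck := hpos k hk.le
    have hh : 0 < c k * m := by positivity
    have h1 := hconv.slope_mono_adjacent (x := 0) (y := k) (z := k + c k * m)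
      (by simp) (by simp only [Set.mem_Ici]; linarith) hk (by linarith)
    rw [add_sub_cancel_left, le_div_iff₀ hh, sub_zero] at h1
    have h0 := (hb 0 le_rfl).2
    have h2 : -1 / k ≤ (c k - c 0) / k := by
      apply div_le_div_of_nonneg_right _ hk.le
      linarith
    have h3 := mul_le_mul_of_nonneg_right h2 hh.le
    rw [le_div_iff₀ hck]
    have h4 : (1 - m / k) * c k = c k + -1 / k * (c k * m) := by ring
    linarith
  · filter_upwards [Filter.eventually_gt_atTop 0] with k hk
    have hck := hpos k hk.le
    have hh : 0 < c k * m := by positivity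
    rw [div_le_one hck]
    exact anti _ _ hk.le (by linarith)
end

section
/- Let c be in the Tehranchi space 𝕔 and twice continuously differentiable on (0, ∞). Then for every fixed m ≥ 0, the map k ↦ (𝕋_k c)(m) = c(k + c(k)·m)/c(k) is nondecreasing on the set {k ≥ 0 : c(k) > 0}: for all 0 ≤ k₁ ≤ k₂ with c(k₂) > 0, it holds that c(k₁ + c(k₁)·m)/c(k₁) ≤ c(k₂ + c(k₂)·m)/c(k₂). -/
theorem tehranchi_antitone (c : ℝ → ℝ) (hc : TehranchiSpace c) (x y : ℝ) (hx : 0 ≤ x)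
    (hxy : x ≤ y) : c y ≤ c x := by
  by_contra! h
  have hlt : x < y := lt_of_le_of_ne hxy (by rintro rfl; exact lt_irrefl _ h)
  have hd : 0 < c y - c x := by linarith
  have hp : 0 < (y - x) * 2 / (c y - c x) := by
    have : 0 < y - x := by linarith
    positivity
  obtain ⟨z, hz⟩ : ∃ z, z = y + (y - x) * 2 / (c y - c x) := ⟨_, rfl⟩
  have hyz : y < z := by linarith
  have hs := hc.1.slope_mono_adjacent (x := x) (y := y) (z := z) hx
    (show (0:ℝ) ≤ z by linarith) hlt hyz
  rw [div_le_div_iff₀ (by linarith) (by linarith)] at hs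
  have e : (c y - c x) * (z - y) = (y - x) * 2 := by
    rw [hz]; field_simp; ring
  have hz1 := (hc.2 z (by linarith)).2
  have hy0 := le_trans (le_max_right _ _) (hc.2 y (by linarith)).1
  nlinarith

/-- For `c` in the Tehranchi space and twice continuously differentiable on `(0, ∞)`,
the map `k ↦ (𝕋_k c)(m) = c (k + c k · m) / c k` is nondecreasing in `k` on the set
where `c k > 0`. -/
theorem Tk_monotone_in_k (c : ℝ → ℝ) (hc : TehranchiSpace c)
    (hc2 : ContDiffOn ℝ 2 c (Set.Ioi 0)) (m : ℝ) (hm : 0 ≤ m) :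
    ∀ k₁ k₂ : ℝ, 0 ≤ k₁ → k₁ ≤ k₂ → 0 < c k₂ →
      c (k₁ + c k₁ * m) / c k₁ ≤ c (k₂ + c k₂ * m) / c k₂ := by
  intro k₁ k₂ h1 h12 hpos
  have hA : c k₂ ≤ c k₁ := tehranchi_antitone c hc _ _ h1 h12
  have hpos1 : 0 < c k₁ := by linarith
  rcases hm.eq_or_lt with rfl | hm'
  · simp [hpos.ne', hpos1.ne']
  rcases h12.eq_or_lt with rfl | hlt
  · exact le_rfl
  have hp1 : 0 < c k₁ * m := by positivity
  have hp2 : 0 < c k₂ * m := by positivity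
  obtain ⟨y₁, hy₁⟩ : ∃ y, y = k₁ + c k₁ * m := ⟨_, rfl⟩
  obtain ⟨y₂, hy₂⟩ : ∃ y, y = k₂ + c k₂ * m := ⟨_, rfl⟩
  rw [← hy₁, ← hy₂, div_le_div_iff₀ hpos1 hpos]
  have hb1 : 0 ≤ c y₁ := le_trans (le_max_right _ _) (hc.2 y₁ (by linarith)).1
  have hb2 : 0 ≤ c y₂ := le_trans (le_max_right _ _) (hc.2 y₂ (by linarith)).1
  rcases le_or_gt y₂ y₁ with hle | hgt
  · have := tehranchi_antitone c hc y₂ y₁ (by linarith) hle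
    exact mul_le_mul this hA hpos.le hb2
  have m1 : k₁ ∈ Set.Ici (0:ℝ) := h1
  have m2 : k₂ ∈ Set.Ici (0:ℝ) := h1.trans h12
  have n1 : y₁ ∈ Set.Ici (0:ℝ) := by simp only [Set.mem_Ici]; linarith
  have n2 : y₂ ∈ Set.Ici (0:ℝ) := by simp only [Set.mem_Ici]; linarith
  obtain ⟨q, hq⟩ : ∃ q, q = (c k₂ - c k₁) / (k₂ - k₁) := ⟨_, rfl⟩
  have hd : 0 < k₂ - k₁ := by linarith
  have hqe : q * (k₂ - k₁) = c k₂ - c k₁ := by rw [hq]; field_simp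
  have s1 := hc.1.secant_mono m1 m2 n2 (by linarith : k₁ < k₂).ne'
    (by linarith : k₁ < y₂).ne' (by linarith)
  have s2 := hc.1.secant_mono n2 m1 n1 (by linarith : k₁ < y₂).ne hgt.ne (by linarith)
  have s3 := hc.1.secant_mono m2 m1 n2 hlt.ne (by linarith : k₂ < y₂).ne' (by linarith)
  rw [← neg_div_neg_eq (c k₁ - c y₂), ← neg_div_neg_eq (c y₁ - c y₂)] at s2
  simp only [neg_sub] at s2
  rw [← neg_div_neg_eq (c k₁ - c k₂)] at s3
  simp only [neg_sub] at s3
  have t := s1.trans s2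
  rw [← hq, le_div_iff₀ (by linarith)] at t s3
  have e2 : y₂ - k₂ = c k₂ * m := by linarith
  have e3 : y₂ - y₁ = (k₂ - k₁) * (1 + q * m) := by
    rw [hy₁, hy₂]; linear_combination (-m) * hqe
  rw [e2] at s3
  have t' : c y₁ - c y₂ ≤ (c k₁ - c k₂) * (1 + q * m) := by
    rw [e3] at t
    have : q * ((k₂ - k₁) * (1 + q * m)) = (c k₂ - c k₁) * (1 + q * m) := by
      rw [← hqe]; ring
    linarith
  have u1 := mul_le_mul_of_nonneg_right t' hpos.le
  have u2 : (c k₁ - c k₂) * (c k₂ * (1 + q * m)) ≤ (c k₁ - c k₂) * c y₂ :=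
    mul_le_mul_of_nonneg_left (by linarith) (by linarith)
  linarith
end

section
/- Let c be in the Tehranchi space 𝕔 and differentiable on (0, ∞), and let k ≥ 0 and α ≥ 0 satisfy c(k) > 0 and -α·c'(k) ≤ c(k) (i.e. α ≤ -c(k)/c'(k) when c'(k) < 0). Then the function 𝕍_{k,α} c defined by (𝕍_{k,α} c)(m) = c(k + α·m)/c(k) belongs to 𝕔: it is convex and satisfies (1 - m)₊ ≤ (𝕍_{k,α} c)(m) ≤ 1 for all m ≥ 0. Moreover 𝕍_{0,1} c = c. -/
/-- For `c` in the Tehranchi space, differentiable on `(0, ∞)`, `k ≥ 0`, `α ≥ 0` with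
`c k > 0` and `-α·c'(k) ≤ c k` (where `g = c'(k)` is the derivative of `c` at `k` from
within `[0, ∞)`), the transform `𝕍_{k,α} c : m ↦ c (k + α·m) / c k` belongs to the
Tehranchi space; moreover `𝕍_{0,1} c = c`. -/
theorem Vka_maps_Tehranchi_into_itself (c : ℝ → ℝ) (hc : TehranchiSpace c)
    (hdiff : DifferentiableOn ℝ c (Set.Ioi 0))
    (k α g : ℝ) (hk : 0 ≤ k) (hα : 0 ≤ α) (hck : 0 < c k)
    (hg : HasDerivWithinAt c g (Set.Ici 0) k)
    (hαg : -α * g ≤ c k) :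
    TehranchiSpace (fun m => c (k + α * m) / c k) ∧
    ∀ m : ℝ, c (0 + 1 * m) / c 0 = c m := by
  have h01 := hc.2 0 le_rfl
  have hc0 : c 0 = 1 := by
    have := le_max_left (1 - (0:ℝ)) 0
    linarith [h01.1, h01.2]
  refine ⟨⟨⟨convex_Ici 0, ?_⟩, ?_⟩, ?_⟩
  · intro x hx y hy a b ha hb hab
    have hx' : 0 ≤ x := hx
    have hy' : 0 ≤ y := hy
    have key := hc.1.2 (Set.mem_Ici.2 (by positivity : 0 ≤ k + α * x))
      (Set.mem_Ici.2 (by positivity : 0 ≤ k + α * y)) ha hb hab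
    simp only [smul_eq_mul] at key ⊢
    have e : a * (k + α * x) + b * (k + α * y) = k + α * (a * x + b * y) := by
      linear_combination k * hab
    rw [e] at key
    rw [← mul_div_assoc, ← mul_div_assoc, ← add_div]
    gcongr
  · intro m hm
    have hp : 0 ≤ α * m := by positivity
    refine ⟨max_le ?_ ?_, ?_⟩
    · rw [le_div_iff₀ hck]
      rcases hp.eq_or_lt with h | h
      · rw [← h, add_zero]
        nlinarith
      · have hs := hc.1.le_slope_of_hasDerivWithinAt (Set.mem_Ici.2 hk)
          (Set.mem_Ici.2 (by linarith : 0 ≤ k + α * m)) (by linarith) hg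
        rw [slope_def_field, le_div_iff₀ (by linarith)] at hs
        nlinarith [mul_le_mul_of_nonneg_right hαg hm]
    · exact div_nonneg (le_trans (le_max_right _ _) (hc.2 _ (by linarith)).1) hck.le
    · rw [div_le_one hck]
      exact tehranchi_antitone c hc _ _ hk (by linarith)
  · intro m
    rw [hc0, zero_add, one_mul, div_one]
end

section
/- Let c be in the Tehranchi space 𝕔 and let a, b, α, β ≥ 0 be such that c(a) > 0 and c(a + α·b) > 0. Then 𝕍_{b,β}(𝕍_{a,α} c) = 𝕍_{a+α·b, α·β} c, i.e. for all m ≥ 0, (𝕍_{a,α}c)(b + β·m)/(𝕍_{a,α}c)(b) = c(a + α·b + α·β·m)/c(a + α·b). Furthermore, if c is differentiable, α ≤ -c(a)/c'(a) and β ≤ -(𝕍_{a,α}c)(b) / (d/dm)(𝕍_{a,α}c)(b), then α·β ≤ -c(a + α·b)/c'(a + α·b). -/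
/-- Semigroup property of the transforms `𝕍`: `𝕍_{b,β} (𝕍_{a,α} c) = 𝕍_{a+α·b, α·β} c`.
Furthermore, if `c` is differentiable at the relevant points with negative derivatives
`g₁ = c'(a)` and `g₂ = c'(a + α·b)`, and `α ≤ -c(a)/c'(a)` and
`β ≤ -(𝕍_{a,α}c)(b) / (d/dm)(𝕍_{a,α}c)(b)`, then `α·β ≤ -c(a + α·b)/c'(a + α·b)`. -/
theorem Vka_semigroup (c : ℝ → ℝ) (hc : TehranchiSpace c)
    (a b α β : ℝ) (ha : 0 ≤ a) (hb : 0 ≤ b) (hα : 0 ≤ α) (hβ : 0 ≤ β)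
    (hca : 0 < c a) (hcab : 0 < c (a + α * b)) :
    (∀ m : ℝ, 0 ≤ m →
      (c (a + α * (b + β * m)) / c a) / (c (a + α * b) / c a)
        = c (a + α * b + α * β * m) / c (a + α * b)) ∧
    (∀ g₁ g₂ : ℝ, HasDerivAt c g₁ a → HasDerivAt c g₂ (a + α * b) →
      g₁ < 0 → g₂ < 0 →
      α ≤ -c a / g₁ →
      β ≤ -((c (a + α * b) / c a) / deriv (fun m => c (a + α * m) / c a) b) →
      α * β ≤ -c (a + α * b) / g₂) := by
  refine ⟨fun m _ => ?_, fun g₁ g₂ _ h2 _ hg2 _ hB => ?_⟩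
  · rw [div_div_div_cancel_right₀ hca.ne']
    congr 2
    ring
  · rcases hα.eq_or_lt with h0 | hpos
    · rw [← h0] at hcab ⊢
      rw [zero_mul β]
      exact div_nonneg_of_nonpos (by linarith) hg2.le
    · have hl : HasDerivAt (fun m : ℝ => a + α * m) α b := by
        simpa using ((hasDerivAt_id b).const_mul α).const_add a
      have hd : HasDerivAt (fun m => c (a + α * m) / c a) (g₂ * α / c a) b :=
        (HasDerivAt.comp b h2 hl).div_const (c a)
      rw [hd.deriv] at hB
      have h := mul_le_mul_of_nonneg_left hB hα
      refine h.trans (le_of_eq ?_)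
      have := hg2.ne
      have := hca.ne'
      field_simp
end

section
/- Let c be in the Tehranchi space 𝕔, differentiable on (0, ∞), and let a, b ≥ 0 be such that c(a) > 0, c'(a) < 0, and, at the point a - (c(a)/c'(a))·b, also c > 0 and c' < 0. Then 𝕌_b(𝕌_a c) = 𝕌_{a - (c(a)/c'(a))·b} c; that is, iterating the transformation 𝕌 twice with relative underlying moneynesses a and b yields the single transformation 𝕌 with relative underlying moneyness a - (c(a)/c'(a))·b. -/
/-- The transformation `𝕌_k c : m ↦ c (k - (c k / c' k)·m) / c k`. -/
noncomputable def Uk (c : ℝ → ℝ) (k : ℝ) : ℝ → ℝ :=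
  fun m => c (k - c k / deriv c k * m) / c k

/-- Iterates of `𝕌`: for `c` in the Tehranchi space, differentiable on `(0, ∞)`, with
`c > 0` and `c' < 0` at `a` and at `a - (c a / c' a)·b`, one has
`𝕌_b (𝕌_a c) = 𝕌_{a - (c a / c' a)·b} c`. -/
theorem Uk_semigroup (c : ℝ → ℝ) (hc : TehranchiSpace c)
    (hdiff : DifferentiableOn ℝ c (Set.Ioi 0))
    (a b : ℝ) (ha : 0 ≤ a) (hb : 0 ≤ b)
    (hca : 0 < c a) (hda : DifferentiableAt ℝ c a) (h'a : deriv c a < 0)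
    (hcA : 0 < c (a - c a / deriv c a * b))
    (hdA : DifferentiableAt ℝ c (a - c a / deriv c a * b))
    (h'A : deriv c (a - c a / deriv c a * b) < 0) :
    Uk (Uk c a) b = Uk c (a - c a / deriv c a * b) := by
  have hlin : HasDerivAt (fun m : ℝ => a - c a / deriv c a * m) (-(c a / deriv c a)) b := by
    simpa using ((hasDerivAt_id b).const_mul (c a / deriv c a)).const_sub a
  have hder : HasDerivAt (Uk c a)
      (deriv c (a - c a / deriv c a * b) * (-(c a / deriv c a)) / c a) b :=
    (HasDerivAt.comp b hdA.hasDerivAt hlin).div_const (c a)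
  have hUb : Uk c a b = c (a - c a / deriv c a * b) / c a := rfl
  funext m
  have e1 : Uk (Uk c a) b m
      = Uk c a (b - Uk c a b / deriv (Uk c a) b * m) / Uk c a b := rfl
  rw [e1, hder.deriv, hUb]
  unfold Uk
  have h1 := hca.ne'
  have h2 := h'a.ne
  generalize hA : a - c a / deriv c a * b = A at *
  have h3 := hcA.ne'
  have h4 := h'A.ne
  have harg : a - c a / deriv c a *
      (b - c A / c a / (deriv c A * (-(c a / deriv c a)) / c a) * m)
      = A - c A / deriv c A * m := by
    have e : c a / deriv c a * (c A / c a / (deriv c A * (-(c a / deriv c a)) / c a) * m)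
        = -(c A / deriv c A * m) := by
      field_simp
    rw [mul_sub, e, ← hA]
    ring
  rw [harg, div_div_div_cancel_right₀ h1]
end

section
/- Let c be in the Tehranchi space 𝕔, differentiable on (0, ∞), and let k ≥ 0 satisfy c(k) > 0 and c'(k) < 0. Then the function 𝕌_k c defined by (𝕌_k c)(m) = c(k - (c(k)/c'(k))·m)/c(k) belongs to 𝕔 (it is convex with (1 - m)₊ ≤ (𝕌_k c)(m) ≤ 1 for all m ≥ 0), and its right derivative at 0 equals -1: (d/dm)(𝕌_k c)(0⁺) = -1. -/
/-- For `c` in the Tehranchi space, differentiable on `(0, ∞)`, and `k ≥ 0` with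
`c k > 0` and `c'(k) < 0` (`g` being the derivative of `c` at `k` from within `[0, ∞)`),
the transform `𝕌_k c : m ↦ c (k - (c k / c'(k))·m) / c k` belongs to the Tehranchi
space and its right derivative at `0` equals `-1`. -/
theorem Uk_in_Tehranchi_deriv_minus_one (c : ℝ → ℝ) (hc : TehranchiSpace c)
    (hdiff : DifferentiableOn ℝ c (Set.Ioi 0))
    (k g : ℝ) (hk : 0 ≤ k) (hck : 0 < c k)
    (hg : HasDerivWithinAt c g (Set.Ici 0) k) (hgneg : g < 0) :
    TehranchiSpace (fun m => c (k - c k / g * m) / c k) ∧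
    HasDerivWithinAt (fun m => c (k - c k / g * m) / c k) (-1) (Set.Ici 0) 0 := by
  obtain ⟨hconv, hb⟩ := hc
  have hanti : ∀ x y : ℝ, 0 ≤ x → x < y → c y ≤ c x := by
    intro x y hx hxy
    by_contra! hlt
    have hs : 0 < (c y - c x) / (y - x) := div_pos (by linarith) (by linarith)
    set s := (c y - c x) / (y - x) with hsdef
    have h2 : 0 < 2 / s := by positivity
    have hz : (0:ℝ) ≤ y + 2 / s := by linarith
    have h := hconv.slope_mono_adjacent (x := x) (y := y) (z := y + 2 / s)
      (Set.mem_Ici.2 hx) (Set.mem_Ici.2 hz) hxy (by linarith)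
    rw [← hsdef, add_sub_cancel_left, le_div_iff₀ h2, mul_div_cancel₀ _ hs.ne'] at h
    have h3 := (hb _ hz).2
    have h4 := (le_max_right _ _).trans (hb y (by linarith)).1
    linarith
  obtain ⟨a, ha⟩ : ∃ a, a = -(c k / g) := ⟨_, rfl⟩
  have hapos : 0 < a := by
    rw [ha, ← div_neg]; exact div_pos hck (by linarith)
  have hag : g * a = -c k := by
    rw [ha]; field_simp [hgneg.ne]
  have hfun : (fun m => c (k - c k / g * m) / c k) = fun m => c (k + a * m) / c k := by
    funext m; rw [ha]; congr 2; ring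
  rw [hfun]
  refine ⟨⟨⟨convex_Ici 0, ?_⟩, ?_⟩, ?_⟩
  · intro x hx y hy p q hp hq hpq
    have hx' : (0:ℝ) ≤ x := hx
    have hy' : (0:ℝ) ≤ y := hy
    have h := hconv.2 (x := k + a * x) (Set.mem_Ici.2 (by positivity)) (y := k + a * y)
      (Set.mem_Ici.2 (by positivity)) hp hq hpq
    simp only [smul_eq_mul] at h ⊢
    have e : p * (k + a * x) + q * (k + a * y) = k + a * (p * x + q * y) := by
      linear_combination k * hpq
    rw [e] at h
    calc _ ≤ (p * c (k + a * x) + q * c (k + a * y)) / c k := by gcongr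
      _ = _ := by ring
  · intro m hm
    rcases hm.eq_or_lt with rfl | hm
    · simp [hck.ne']
    have ham : 0 < a * m := by positivity
    have hkm : 0 ≤ k + a * m := by linarith
    have h0 := (le_max_right _ _).trans (hb _ hkm).1
    have h1 := hanti k (k + a * m) hk (by linarith)
    have h := hconv.le_slope_of_hasDerivWithinAt (Set.mem_Ici.2 hk) (Set.mem_Ici.2 hkm)
      (by linarith) hg
    rw [slope_def_field, add_sub_cancel_left, le_div_iff₀ ham, ← mul_assoc, hag] at h
    refine ⟨max_le ?_ (by positivity), (div_le_one hck).2 h1⟩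
    rw [le_div_iff₀ hck]
    linarith
  · have hin : HasDerivWithinAt (fun m : ℝ => k + a * m) a (Set.Ici 0) 0 := by
      simpa using (((hasDerivAt_id (0:ℝ)).const_mul a).const_add k).hasDerivWithinAt
    have hmaps : Set.MapsTo (fun m : ℝ => k + a * m) (Set.Ici 0) (Set.Ici 0) := by
      intro m hm
      have hm' : (0:ℝ) ≤ m := hm
      exact Set.mem_Ici.2 (by positivity)
    have h := (HasDerivWithinAt.comp (h₂ := c) (h₂' := g) (0:ℝ) (by simpa using hg) hin hmaps).div_const (c k)
    rw [hag, neg_div, div_self hck.ne'] at h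
    exact h
end

section
/- Let F : ℝ → (0, 1) be continuous and strictly increasing with limit 0 at -∞ and limit 1 at +∞, so that F has an inverse F⁻¹ : (0, 1) → ℝ. Let S, K > 0 and y ≥ 0, and suppose that X := sup over p ∈ (0, 1) of (S·F(F⁻¹(p) + y) - p·K) is attained at some p* ∈ (0, 1). Then S = K·ψ(X/K, y; F), where ψ(a, y; F) := inf over r ∈ ℝ of (a + F(r - y))/F(r). Equivalently, S = inf over r ∈ ℝ of (X + K·F(r - y))/F(r). -/
/-- Inversion of the Carr-Pelts-Tehranchi pricing formula: if `F : ℝ → (0,1)` is a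
continuous strictly increasing cdf-like function with inverse `Finv` on `(0,1)`, and
the Call price `X = sup_{p ∈ (0,1)} (S·F(F⁻¹(p) + y) - p·K)` is attained, then
`S = K·ψ(X/K, y; F)` where `ψ(a, y; F) = inf_r (a + F(r - y))/F(r)`; equivalently
`S = inf_r (X + K·F(r - y))/F(r)`. -/
theorem cpt_inversion (F Finv : ℝ → ℝ)
    (hFc : Continuous F) (hFm : StrictMono F)
    (hrange : ∀ x : ℝ, F x ∈ Set.Ioo (0:ℝ) 1)
    (hbot : Filter.Tendsto F Filter.atBot (nhds 0))
    (htop : Filter.Tendsto F Filter.atTop (nhds 1))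
    (hFinv : ∀ p ∈ Set.Ioo (0:ℝ) 1, F (Finv p) = p)
    (S K y X : ℝ) (hS : 0 < S) (hK : 0 < K) (hy : 0 ≤ y)
    (hX : IsGreatest ((fun p => S * F (Finv p + y) - p * K) '' Set.Ioo 0 1) X) :
    S = K * sInf (Set.range (fun r => (X / K + F (r - y)) / F r)) ∧
    S = sInf (Set.range (fun r => (X + K * F (r - y)) / F r)) := by
  have hle : ∀ r, S * F r ≤ X + K * F (r - y) := by
    intro r
    have h := hX.2 ⟨F (r - y), hrange _, rfl⟩
    have h2 : Finv (F (r - y)) = r - y := hFm.injective (hFinv _ (hrange _))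
    simp only [h2, sub_add_cancel] at h
    linarith
  obtain ⟨p, hp, hpX⟩ := hX.1
  simp only at hpX
  have heq : S * F (Finv p + y) = X + K * F (Finv p + y - y) := by
    rw [add_sub_cancel_right, hFinv p hp]
    linarith
  have h1 : IsLeast (Set.range (fun r => (X / K + F (r - y)) / F r)) (S / K) := by
    refine ⟨⟨Finv p + y, ?_⟩, ?_⟩
    · have h0 := (hrange (Finv p + y)).1
      simp only
      rw [div_eq_div_iff h0.ne' hK.ne', heq]
      field_simp
    · rintro _ ⟨r, rfl⟩
      have h0 := (hrange r).1
      have h3 : (X / K + F (r - y)) * K = X + K * F (r - y) := by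
        field_simp
      simp only
      rw [div_le_div_iff₀ hK h0, h3]
      exact hle r
  have h2 : IsLeast (Set.range (fun r => (X + K * F (r - y)) / F r)) S := by
    refine ⟨⟨Finv p + y, ?_⟩, ?_⟩
    · have h0 := (hrange (Finv p + y)).1
      simp only
      rw [div_eq_iff h0.ne', heq]
    · rintro _ ⟨r, rfl⟩
      have h0 := (hrange r).1
      simp only
      rw [le_div_iff₀ h0]
      exact hle r
  refine ⟨?_, h2.csInf_eq.symm⟩
  rw [h1.csInf_eq]
  field_simp
end

section
/- Let f : ℝ → (0, ∞) be a differentiable probability density function (∫_ℝ f = 1) which is strictly log-concave in the sense that f'/f is strictly decreasing, and let F(r) = ∫_{-∞}^r f(t) dt be its cumulative distribution function. Then for every y > 0, the function δ(r; y) := (f(r - y)/f(r))·F(r) - F(r - y) is strictly increasing in r on ℝ. -/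
open MeasureTheory

/-- For a strictly log-concave differentiable positive density `f` (i.e. `f'/f` is
strictly decreasing, `∫ f = 1`) with cdf `F r = ∫_{-∞}^r f`, the function
`δ(r; y) = (f(r - y)/f(r))·F(r) - F(r - y)` is strictly increasing in `r`, for every
`y > 0`. -/
theorem delta_strictMono (f : ℝ → ℝ)
    (hf_pos : ∀ x : ℝ, 0 < f x)
    (hdiff : Differentiable ℝ f)
    (hdens : ∫ x : ℝ, f x = 1)
    (hlogconcave : StrictAnti (fun x => deriv f x / f x))
    (y : ℝ) (hy : 0 < y) :
    StrictMono (fun r =>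
      f (r - y) / f r * (∫ t in Set.Iic r, f t) - ∫ t in Set.Iic (r - y), f t) := by
  have hint : Integrable f := by
    by_contra h
    rw [integral_undef h] at hdens
    exact zero_ne_one hdens
  have hF : ∀ r, HasDerivAt (fun r => ∫ t in Set.Iic r, f t) (f r) r := by
    intro r
    have h1 : HasDerivAt (fun u => ∫ t in (0:ℝ)..u, f t) (f r) r :=
      intervalIntegral.integral_hasDerivAt_right hint.intervalIntegrable
        (hdiff.continuous.stronglyMeasurableAtFilter _ _) hdiff.continuous.continuousAt
    have h2 := h1.const_add (∫ t in Set.Iic (0:ℝ), f t)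
    refine h2.congr_of_eventuallyEq (Filter.Eventually.of_forall fun u => ?_)
    have := intervalIntegral.integral_Iic_sub_Iic (μ := volume) (a := (0:ℝ)) (b := u)
      hint.integrableOn hint.integrableOn
    show _ = _ + _
    linarith
  have hFpos : ∀ r, 0 < ∫ t in Set.Iic r, f t := by
    intro r
    rw [setIntegral_pos_iff_support_of_nonneg_ae
      (Filter.Eventually.of_forall fun x => (hf_pos x).le) hint.integrableOn]
    have : Function.support f = Set.univ := by
      ext x
      simp [(hf_pos x).ne']
    simp [this]
  apply strictMono_of_deriv_pos
  intro r
  have hsub : HasDerivAt (fun r : ℝ => r - y) 1 r := (hasDerivAt_id r).sub_const y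
  have ha : HasDerivAt (fun r => f (r - y)) (deriv f (r - y)) r :=
    HasDerivAt.comp_sub_const r y (hdiff (r - y)).hasDerivAt
  have hb : HasDerivAt (fun r => ∫ t in Set.Iic (r - y), f t) (f (r - y)) r :=
    HasDerivAt.comp_sub_const r y (hF (r - y))
  have hd := ((ha.fun_div (hdiff r).hasDerivAt (hf_pos r).ne').fun_mul (hF r)).fun_sub hb
  rw [hd.deriv]
  have hl : deriv f r / f r < deriv f (r - y) / f (r - y) := hlogconcave (by linarith)
  rw [div_lt_div_iff₀ (hf_pos _) (hf_pos _)] at hl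
  have hc : f (r - y) / f r * f r = f (r - y) := div_mul_cancel₀ _ (hf_pos r).ne'
  have h3 : 0 < (deriv f (r - y) * f r - f (r - y) * deriv f r) / f r ^ 2 :=
    div_pos (by linarith) (pow_pos (hf_pos r) 2)
  have h4 := mul_pos h3 (hFpos r)
  linarith
end
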